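/- Let n ≥ 1, s > 0, q ∈ [1,∞], and let p, p₁, p₂, r₁, r₂ ∈ [1,∞] satisfy 1/p = 1/p₁ + 1/p₂ = 1/r₁ + 1/r₂, with p < ∞. Then there is a constant C > 0 such that for all Schwartz functions f, g on ℝⁿ, ‖fg‖_{B^s_{p,q}} ≤ C ( ‖f‖_{L^{p₁}} ‖g‖_{B^s_{p₂,q}} + ‖g‖_{L^{r₁}} ‖f‖_{B^s_{r₂,q}} ). -/

import Mathlib

open MeasureTheory Real Filter
open scoped ENNReal FourierTransform

noncomputable section

/-- `ℝⁿ` as a Euclidean space. -/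
abbrev Rn (n : ℕ) : Type := EuclideanSpace ℝ (Fin n)

variable {n : ℕ}

/-- The Fourier transform of a real-valued Schwartz function, viewed as a ℂ-valued function. -/
def ftC (f : SchwartzMap (Rn n) ℝ) : Rn n → ℂ :=
  𝓕 (fun x => (f x : ℂ))

/-- `ψ₀` is a Littlewood–Paley function: an even, radial Schwartz function whose Fourier
transform is nonnegative, supported in the annulus `{ξ : 1/2 < ‖ξ‖ < 2}`, and satisfies
`∑_{j ∈ ℤ} ψ̂₀(2^{-j} ξ) = 1` for `ξ ≠ 0`. -/
structure IsLPF (n : ℕ) (ψ₀ : SchwartzMap (Rn n) ℝ) : Prop where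
  even : ∀ x : Rn n, ψ₀ (-x) = ψ₀ x
  radial : ∀ x y : Rn n, ‖x‖ = ‖y‖ → ψ₀ x = ψ₀ y
  ft_im : ∀ ξ : Rn n, (ftC ψ₀ ξ).im = 0
  ft_nonneg : ∀ ξ : Rn n, 0 ≤ (ftC ψ₀ ξ).re
  ft_supp : ∀ ξ : Rn n, ftC ψ₀ ξ ≠ 0 → 1/2 < ‖ξ‖ ∧ ‖ξ‖ < 2
  ft_sum : ∀ ξ : Rn n, ξ ≠ 0 → HasSum (fun j : ℤ => ftC ψ₀ ((2:ℝ) ^ (-j) • ξ)) 1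

/-- The Littlewood–Paley kernel `ψ_j(x) = 2^{jn} ψ₀(2^j x)`, whose Fourier transform is
`ψ̂₀(2^{-j} ξ)`. -/
def lpKernel (ψ₀ : SchwartzMap (Rn n) ℝ) (j : ℤ) (x : Rn n) : ℝ :=
  (2:ℝ) ^ (j * (n:ℤ)) * ψ₀ ((2:ℝ) ^ j • x)

/-- The Littlewood–Paley projection `Δ_j f = ψ_j ∗ f`. -/
def lpProj (ψ₀ : SchwartzMap (Rn n) ℝ) (j : ℤ) (f : Rn n → ℝ) : Rn n → ℝ :=
  MeasureTheory.convolution (lpKernel ψ₀ j) f (ContinuousLinearMap.mul ℝ ℝ) volume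

/-- `S_j f = ∑_{m ≤ j} Δ_m f`, the low-frequency cutoff; this is the L² function whose
Fourier transform is `(∑_{m ≤ j} ψ̂₀(2^{-m} ξ)) f̂(ξ)`. -/
def lowProj (ψ₀ : SchwartzMap (Rn n) ℝ) (j : ℤ) (f : Rn n → ℝ) (x : Rn n) : ℝ :=
  ∑' m : ℤ, if m ≤ j then lpProj ψ₀ m f x else 0

/-- `Ψ` is the low-frequency piece of the Littlewood–Paley decomposition:
`Ψ̂ = 1 − ∑_{k ≥ 0} ψ̂_k`. -/
def IsLowPiece (ψ₀ Ψ : SchwartzMap (Rn n) ℝ) : Prop :=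
  ∀ ξ : Rn n, ftC Ψ ξ = 1 - ∑' k : ℕ, ftC ψ₀ ((2:ℝ) ^ (-(k:ℤ)) • ξ)

/-- The inhomogeneous Besov norm `‖f‖_{B^s_{p,q}}`, valued in `[0,∞]`:
`‖Ψ∗f‖_{L^p} + (∑_{j ≥ 0} (2^{js} ‖Δ_j f‖_{L^p})^q)^{1/q}`, with the supremum over `j`
replacing the `ℓ^q` sum when `q = ∞`. -/
def besovNorm (ψ₀ Ψ : SchwartzMap (Rn n) ℝ) (s : ℝ) (p q : ℝ≥0∞) (f : Rn n → ℝ) : ℝ≥0∞ :=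
  eLpNorm (MeasureTheory.convolution (fun x => Ψ x) f (ContinuousLinearMap.mul ℝ ℝ) volume)
      p volume +
    (if q = ∞ then
      ⨆ j : ℕ, ENNReal.ofReal ((2:ℝ) ^ ((j:ℝ) * s)) * eLpNorm (lpProj ψ₀ (j:ℤ) f) p volume
    else
      (∑' j : ℕ, (ENNReal.ofReal ((2:ℝ) ^ ((j:ℝ) * s)) *
        eLpNorm (lpProj ψ₀ (j:ℤ) f) p volume) ^ q.toReal) ^ (1 / q.toReal))

/-- The heat semigroup `e^{tΔ} f = h_t ∗ f` with `h_t(x) = (4πt)^{-n/2} e^{-‖x‖²/(4t)}`. -/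
def heatOp (n : ℕ) (t : ℝ) (f : Rn n → ℝ) : Rn n → ℝ :=
  MeasureTheory.convolution
    (fun x : Rn n => (4 * π * t) ^ (-(n:ℝ)/2) * Real.exp (-‖x‖^2 / (4*t))) f
    (ContinuousLinearMap.mul ℝ ℝ) volume

/-- The partial derivative `∂_{x_i} f`. -/
def pderiv' (i : Fin n) (f : Rn n → ℝ) (x : Rn n) : ℝ :=
  fderiv ℝ f x (EuclideanSpace.single i 1)

/-- The Laplacian `Δf = ∑ᵢ ∂²_{x_i} f`. -/
def lapl (f : Rn n → ℝ) (x : Rn n) : ℝ :=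
  ∑ i : Fin n, pderiv' i (pderiv' i f) x

/-!
Write `P_j f` for the low-frequency part of `f` at scale `2^j`, so that `P_0 f = Ψ ∗ f` and
`P_{j+1} f = P_j f + Δ_j f`. Telescoping gives Bony's paraproduct decomposition
`f g = P_0 f P_0 g + ∑_j (P_j f Δ_j g + P_{j+1} g Δ_j f)`. The `j`-th summand has its spectrum in
the ball of radius `2^{j+2}`, while `Δ_k` only sees frequencies above `2^{k-1}`; so `Δ_k`
annihilates it unless `k ≤ j + 2`. On the remaining terms the inequalities of Hölder and Young give
`‖Δ_k (f g)‖_p ≲ ∑_{j ≥ k - 2} (‖f‖_{p₁} ‖Δ_j g‖_{p₂} + ‖g‖_{r₁} ‖Δ_j f‖_{r₂})`. In terms of the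
weighted sequences `2^{js} c_j` this summation has kernel `2^{-s(j-k)}` on `j ≥ k - 2`, which for
`s > 0` has bounded row and column sums, hence is bounded on every `ℓ^q` by Schur's test.
-/

open scoped BoundedContinuousFunction Convolution SchwartzMap Topology

section SchurTest

variable {α β : Type*} [MeasurableSpace α] [MeasurableSpace β] {μ : Measure α} {ν : Measure β}

lemma rpow_lintegral_mul_le {r : ℝ} (hr : 1 ≤ r) {w h : α → ℝ≥0∞} (hw : AEMeasurable w μ)
    (hh : AEMeasurable h μ) :
    (∫⁻ x, w x * h x ∂μ) ^ r ≤ (∫⁻ x, w x ∂μ) ^ (r - 1) * ∫⁻ x, w x * h x ^ r ∂μ := by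
  have hr₀ : 0 < r := zero_lt_one.trans_le hr
  have hr₁ : 0 ≤ 1 - 1 / r := sub_nonneg.2 ((div_le_one hr₀).2 hr)
  have split (x : α) : w x ^ (1 - 1 / r) * (w x * h x ^ r) ^ (1 / r) = w x * h x := by
    rw [ENNReal.mul_rpow_of_nonneg _ _ (by positivity), ← ENNReal.rpow_mul,
      mul_one_div_cancel hr₀.ne', ENNReal.rpow_one, ← mul_assoc,
      ← ENNReal.rpow_add_of_nonneg _ _ hr₁ (by positivity), sub_add_cancel, ENNReal.rpow_one]
  have holder := ENNReal.lintegral_mul_norm_pow_le hw (hw.mul (hh.pow_const r)) hr₁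
    (by positivity : 0 ≤ 1 / r) (sub_add_cancel _ _)
  simp only [Pi.mul_apply, split] at holder
  calc (∫⁻ x, w x * h x ∂μ) ^ r
      ≤ ((∫⁻ x, w x ∂μ) ^ (1 - 1 / r) * (∫⁻ x, w x * h x ^ r ∂μ) ^ (1 / r)) ^ r := by gcongr
    _ = _ := by
      rw [ENNReal.mul_rpow_of_nonneg _ _ hr₀.le, ← ENNReal.rpow_mul, ← ENNReal.rpow_mul,
        one_div_mul_cancel hr₀.ne', ENNReal.rpow_one, sub_mul, one_mul,
        one_div_mul_cancel hr₀.ne']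

lemma lintegral_rpow_lintegral_mul_le [SFinite μ] [SFinite ν] {r : ℝ} (hr : 1 ≤ r) {A : ℝ≥0∞}
    {a : α → β → ℝ≥0∞} (ha : Measurable (Function.uncurry a)) (hrow : ∀ x, ∫⁻ y, a x y ∂ν ≤ A)
    (hcol : ∀ y, ∫⁻ x, a x y ∂μ ≤ A) {h : β → ℝ≥0∞} (hh : AEMeasurable h ν) :
    ∫⁻ x, (∫⁻ y, a x y * h y ∂ν) ^ r ∂μ ≤ A ^ r * ∫⁻ y, h y ^ r ∂ν := by
  have hmeas : AEMeasurable (fun z : α × β ↦ a z.1 z.2 * h z.2 ^ r) (μ.prod ν) :=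
    ha.aemeasurable.mul (hh.comp_snd.pow_const r)
  have hx (x : α) : Measurable (a x) := ha.comp measurable_prodMk_left
  have hy (y : β) : Measurable fun x ↦ a x y := ha.comp measurable_prodMk_right
  calc ∫⁻ x, (∫⁻ y, a x y * h y ∂ν) ^ r ∂μ
      ≤ ∫⁻ x, A ^ (r - 1) * ∫⁻ y, a x y * h y ^ r ∂ν ∂μ := by
        gcongr with x
        refine (rpow_lintegral_mul_le hr (hx x).aemeasurable hh).trans ?_
        gcongr ?_ * _
        exact ENNReal.rpow_le_rpow (hrow x) (sub_nonneg.2 hr)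
    _ = A ^ (r - 1) * ∫⁻ y, (∫⁻ x, a x y ∂μ) * h y ^ r ∂ν := by
        rw [lintegral_const_mul'' _ hmeas.lintegral_prod_right', lintegral_lintegral_swap hmeas]
        simp only [lintegral_mul_const _ (hy _)]
    _ ≤ A ^ (r - 1) * ∫⁻ y, A * h y ^ r ∂ν := by gcongr with y; exact hcol y
    _ = A ^ r * ∫⁻ y, h y ^ r ∂ν := by
        rw [lintegral_const_mul'' _ (hh.pow_const r), ← mul_assoc]
        nth_rw 2 [← ENNReal.rpow_one A]
        rw [← ENNReal.rpow_add_of_nonneg _ _ (sub_nonneg.2 hr) zero_le_one, sub_add_cancel]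

lemma eLpNorm_lintegral_mul_le [SFinite μ] [SFinite ν] {p : ℝ≥0∞} (hp : 1 ≤ p) {A : ℝ≥0∞}
    {a : α → β → ℝ≥0∞} (ha : Measurable (Function.uncurry a)) (hrow : ∀ x, ∫⁻ y, a x y ∂ν ≤ A)
    (hcol : ∀ y, ∫⁻ x, a x y ∂μ ≤ A) {h : β → ℝ≥0∞} (hh : AEMeasurable h ν) :
    eLpNorm (fun x ↦ ∫⁻ y, a x y * h y ∂ν) p μ ≤ A * eLpNorm h p ν := by
  rcases eq_or_ne p ∞ with rfl | hp_top
  · rw [eLpNorm_exponent_top, eLpNorm_exponent_top]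
    refine essSup_le_of_ae_le _ (Eventually.of_forall fun x ↦ ?_)
    calc ∫⁻ y, a x y * h y ∂ν ≤ ∫⁻ y, a x y * eLpNormEssSup h ν ∂ν := by
          refine lintegral_mono_ae ?_
          filter_upwards [enorm_ae_le_eLpNormEssSup h ν] with y hy
          gcongr
          exact hy
      _ = (∫⁻ y, a x y ∂ν) * eLpNormEssSup h ν :=
          lintegral_mul_const _ (ha.comp measurable_prodMk_left)
      _ ≤ A * eLpNormEssSup h ν := by gcongr; exact hrow x
  · have hp₀ : p ≠ 0 := (zero_lt_one.trans_le hp).ne'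
    have hr : 1 ≤ p.toReal := by simpa using ENNReal.toReal_mono hp_top hp
    have hr₀ : 0 < p.toReal := zero_lt_one.trans_le hr
    simp only [eLpNorm_eq_lintegral_rpow_enorm_toReal hp₀ hp_top, enorm_eq_self]
    calc (∫⁻ x, (∫⁻ y, a x y * h y ∂ν) ^ p.toReal ∂μ) ^ (1 / p.toReal)
        ≤ (A ^ p.toReal * ∫⁻ y, h y ^ p.toReal ∂ν) ^ (1 / p.toReal) := by
          gcongr
          exact lintegral_rpow_lintegral_mul_le hr ha hrow hcol hh
      _ = A * (∫⁻ y, h y ^ p.toReal ∂ν) ^ (1 / p.toReal) := by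
          rw [ENNReal.mul_rpow_of_nonneg _ _ (by positivity), ← ENNReal.rpow_mul,
            mul_one_div_cancel hr₀.ne', ENNReal.rpow_one]

end SchurTest

section Young

variable {G E E' F : Type*} [NormedAddCommGroup E] [NormedAddCommGroup E'] [NormedAddCommGroup F]
  [NormedSpace ℝ E] [NormedSpace ℝ E'] [NormedSpace ℝ F] [AddCommGroup G] [MeasurableSpace G]
  [MeasurableAdd₂ G] [MeasurableNeg G] {μ : Measure G} [SFinite μ] [μ.IsAddLeftInvariant]
  [μ.IsNegInvariant]

lemma eLpNorm_convolution_le (L : E →L[ℝ] E' →L[ℝ] F) {p : ℝ≥0∞} (hp : 1 ≤ p) {K : G → E}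
    (hK : StronglyMeasurable K) {f : G → E'} (hf : AEStronglyMeasurable f μ) :
    eLpNorm (K ⋆[L, μ] f) p μ ≤ ‖L‖ₑ * eLpNorm K 1 μ * eLpNorm f p μ := by
  have hker : Measurable (Function.uncurry fun x y : G ↦ ‖L‖ₑ * ‖K (x - y)‖ₑ) :=
    (hK.enorm.comp measurable_sub).const_mul _
  have hK₁ : ∫⁻ t, ‖L‖ₑ * ‖K t‖ₑ ∂μ = ‖L‖ₑ * eLpNorm K 1 μ := by
    rw [lintegral_const_mul _ hK.enorm, eLpNorm_one_eq_lintegral_enorm]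
  calc eLpNorm (K ⋆[L, μ] f) p μ
      ≤ eLpNorm (fun x ↦ ∫⁻ y, ‖L‖ₑ * ‖K (x - y)‖ₑ * ‖f y‖ₑ ∂μ) p μ := by
        refine eLpNorm_mono_enorm fun x ↦ ?_
        rw [enorm_eq_self, ← lintegral_sub_left_eq_self _ x]
        refine (enorm_integral_le_lintegral_enorm _).trans (lintegral_mono fun t ↦ ?_)
        rw [sub_sub_cancel]
        exact L.le_opENorm₂ _ _
    _ ≤ ‖L‖ₑ * eLpNorm K 1 μ * eLpNorm (fun y ↦ ‖f y‖ₑ) p μ := by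
        refine eLpNorm_lintegral_mul_le hp hker (fun x ↦ ?_) (fun y ↦ ?_) hf.enorm
        · rw [lintegral_sub_left_eq_self (fun t ↦ ‖L‖ₑ * ‖K t‖ₑ) x, hK₁]
        · rw [lintegral_sub_right_eq_self (fun t ↦ ‖L‖ₑ * ‖K t‖ₑ) y, hK₁]
    _ = ‖L‖ₑ * eLpNorm K 1 μ * eLpNorm f p μ := by rw [eLpNorm_enorm]

end Young

section DyadicSequences

lemma tsum_ite_comp_le_tsum {ι κ : Type*} {P : ι → Prop} [DecidablePred P] {e : ι → κ}
    (he : Set.InjOn e {i | P i}) (F : κ → ℝ≥0∞) :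
    ∑' i, (if P i then F (e i) else 0) ≤ ∑' k, F k :=
  calc ∑' i, (if P i then F (e i) else 0) = ∑' i : {i | P i}, F (e i) := by
        simp only [tsum_subtype {i | P i} fun i ↦ F (e i), Set.indicator_apply, Set.mem_ofPred_eq]
    _ ≤ ∑' k, F k := ENNReal.tsum_comp_le_tsum_of_injective he.injective F

lemma tsum_two_rpow_neg_ne_top {s : ℝ} (hs : 0 < s) :
    ∑' i : ℕ, (2 : ℝ≥0∞) ^ (-(i * s)) ≠ ∞ := by
  have hlt : (2 : ℝ≥0∞) ^ (-s) < 1 :=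
    ENNReal.rpow_lt_one_of_one_lt_of_neg (by norm_num) (neg_lt_zero.2 hs)
  have hgeom (i : ℕ) : (2 : ℝ≥0∞) ^ (-(i * s)) = (2 ^ (-s)) ^ i := by
    rw [← ENNReal.rpow_natCast, ← ENNReal.rpow_mul]
    ring_nf
  simp only [hgeom, ENNReal.tsum_geometric]
  exact ENNReal.inv_ne_top.2 (tsub_pos_of_lt hlt).ne'

/-- The norm of a sequence in `ℓ^q` with weight `2^{js}`. -/
def dyadicNorm (s : ℝ) (q : ℝ≥0∞) (c : ℕ → ℝ≥0∞) : ℝ≥0∞ :=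
  eLpNorm (fun j : ℕ ↦ (2 : ℝ≥0∞) ^ (j * s) * c j) q Measure.count

variable {s : ℝ} {q : ℝ≥0∞}

lemma dyadicNorm_eq_ite (s : ℝ) (hq : q ≠ 0) (c : ℕ → ℝ≥0∞) :
    dyadicNorm s q c = if q = ∞ then ⨆ j : ℕ, (2 : ℝ≥0∞) ^ (j * s) * c j
      else (∑' j : ℕ, ((2 : ℝ≥0∞) ^ (j * s) * c j) ^ q.toReal) ^ (1 / q.toReal) := by
  split_ifs with hq_top
  · simp [dyadicNorm, hq_top]
  · simp [dyadicNorm, eLpNorm_eq_lintegral_rpow_enorm_toReal hq hq_top, lintegral_count]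

lemma dyadicNorm_mono {c d : ℕ → ℝ≥0∞} (h : ∀ j, c j ≤ d j) :
    dyadicNorm s q c ≤ dyadicNorm s q d := by
  refine eLpNorm_mono_enorm fun j ↦ ?_
  simp only [enorm_eq_self]
  gcongr
  exact h j

lemma dyadicNorm_const_mul_le (A : ℝ≥0∞) (c : ℕ → ℝ≥0∞) :
    dyadicNorm s q (fun j ↦ A * c j) ≤ A * dyadicNorm s q c := by
  refine eLpNorm_le_mul_eLpNorm_of_ae_le_mul'' (c := A) q ?_ ?_
  · exact (measurable_of_countable _).aestronglyMeasurable
  · exact Eventually.of_forall fun j ↦ by simp only [enorm_eq_self, mul_left_comm, le_refl]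

lemma dyadicNorm_add_le (hq : 1 ≤ q) (c d : ℕ → ℝ≥0∞) :
    dyadicNorm s q (fun j ↦ c j + d j) ≤ dyadicNorm s q c + dyadicNorm s q d := by
  simp only [dyadicNorm, mul_add]
  exact eLpNorm_add_le (measurable_of_countable _).aestronglyMeasurable
    (measurable_of_countable _).aestronglyMeasurable hq

lemma tsum_le_mul_dyadicNorm (hq : q ≠ 0) (c : ℕ → ℝ≥0∞) :
    ∑' j, c j ≤ (∑' j : ℕ, (2 : ℝ≥0∞) ^ (-(j * s))) * dyadicNorm s q c := by
  rw [← ENNReal.tsum_mul_right]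
  refine ENNReal.tsum_le_tsum fun j ↦ ?_
  calc c j = 2 ^ (-(j * s)) * (2 ^ (j * s) * c j) := by
        rw [← mul_assoc, ← ENNReal.rpow_add _ _ (by norm_num) (by norm_num), neg_add_cancel,
          ENNReal.rpow_zero, one_mul]
    _ ≤ 2 ^ (-(j * s)) * dyadicNorm s q c := by
        gcongr
        exact enorm_le_eLpNorm_count (fun j : ℕ ↦ (2 : ℝ≥0∞) ^ (j * s) * c j) j hq

lemma dyadicNorm_tsum_le (hq : 1 ≤ q) (m : ℕ) (c : ℕ → ℝ≥0∞) :
    dyadicNorm s q (fun k ↦ ∑' j, if k ≤ j + m then c j else 0) ≤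
      2 ^ (m * s) * (∑' i : ℕ, (2 : ℝ≥0∞) ^ (-(i * s))) * dyadicNorm s q c := by
  set F : ℕ → ℝ≥0∞ := fun i ↦ 2 ^ (m * s) * 2 ^ (-(i * s)) with hF
  let a : ℕ → ℕ → ℝ≥0∞ := fun k j ↦ if k ≤ j + m then F (j + m - k) else 0
  have hkernel (k j : ℕ) : 2 ^ (k * s) * (if k ≤ j + m then c j else 0) =
      a k j * (2 ^ (j * s) * c j) := by
    by_cases hkj : k ≤ j + m
    · simp only [a, hF, hkj, if_true, Nat.cast_sub hkj, ← mul_assoc,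
        ← ENNReal.rpow_add _ _ two_ne_zero ENNReal.ofNat_ne_top]
      push_cast
      ring_nf
    · simp [a, hkj]
  have hrow (k : ℕ) : ∑' j, a k j ≤ ∑' i, F i :=
    tsum_ite_comp_le_tsum (fun i hi j hj hij ↦ by grind) F
  have hcol (j : ℕ) : ∑' k, a k j ≤ ∑' i, F i :=
    tsum_ite_comp_le_tsum (e := fun k ↦ j + m - k) (fun i hi k hk hik ↦ by grind) F
  have schur := eLpNorm_lintegral_mul_le (μ := Measure.count) (ν := Measure.count) hq
    (measurable_of_countable (Function.uncurry a)) (fun k ↦ by rw [lintegral_count]; exact hrow k)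
    (fun j ↦ by rw [lintegral_count]; exact hcol j)
    (measurable_of_countable fun j : ℕ ↦ (2 : ℝ≥0∞) ^ (j * s) * c j).aemeasurable
  simpa only [dyadicNorm, lintegral_count, ← ENNReal.tsum_mul_left, hkernel, hF] using schur

lemma add_sum_range_le_tsum (y : ℝ≥0∞) (c : ℕ → ℝ≥0∞) (J : ℕ) :
    y + ∑ j ∈ Finset.range J, c j ≤ ∑' j, (c j + if j = 0 then y else 0) := by
  rw [ENNReal.tsum_add, tsum_ite_eq, add_comm]
  gcongr
  exact ENNReal.sum_le_tsum _

lemma dyadicNorm_ite_eq_zero_le (hq : q ≠ 0) (y : ℝ≥0∞) :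
    dyadicNorm s q (fun j ↦ if j = 0 then y else 0) ≤ y := by
  rw [dyadicNorm_eq_ite s hq]
  split_ifs with hq_top
  · exact iSup_le fun j ↦ by rcases eq_or_ne j 0 with rfl | hj <;> simp [*]
  · rw [tsum_eq_single 0 fun j hj ↦ by simp [hj, ENNReal.toReal_pos hq hq_top], ← ENNReal.rpow_mul,
      mul_one_div_cancel (ENNReal.toReal_pos hq hq_top).ne']
    simp

end DyadicSequences

section Dilation

variable {E : Type*} [NormedAddCommGroup E] [NormedSpace ℝ E]

lemma integral_zpow_smul_comp_zpow_smul (j : ℤ) (φ : Rn n → E) :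
    ∫ x, (2 : ℝ) ^ (j * (n : ℤ)) • φ ((2 : ℝ) ^ j • x) = ∫ x, φ x := by
  have hpos : (0 : ℝ) < ((2 : ℝ) ^ j) ^ n := by positivity
  rw [integral_smul, Measure.integral_comp_smul, finrank_euclideanSpace_fin, smul_smul, zpow_mul,
    zpow_natCast, abs_inv, abs_of_pos hpos, mul_inv_cancel₀ hpos.ne', one_smul]

lemma integral_lpKernel_smul (K : 𝓢(Rn n, ℝ)) (j : ℤ) (φ : Rn n → E) :
    ∫ x, lpKernel K j x • φ x = ∫ x, K x • φ ((2 : ℝ) ^ (-j) • x) := by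
  rw [← integral_zpow_smul_comp_zpow_smul j fun x ↦ K x • φ ((2 : ℝ) ^ (-j) • x)]
  congr with x
  rw [smul_smul ((2 : ℝ) ^ (-j)), ← zpow_add₀ two_ne_zero, neg_add_cancel, zpow_zero, one_smul,
    lpKernel, smul_smul]

/-- `lpKernel K j` as a Schwartz function. -/
def lpSchwartz (K : 𝓢(Rn n, ℝ)) (j : ℤ) : 𝓢(Rn n, ℝ) :=
  (2 : ℝ) ^ (j * (n : ℤ)) • SchwartzMap.compCLMOfContinuousLinearEquiv ℝ
    (ContinuousLinearEquiv.smulLeft (Units.mk0 ((2 : ℝ) ^ j) (by positivity))) K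

lemma coe_lpSchwartz (K : 𝓢(Rn n, ℝ)) (j : ℤ) : ⇑(lpSchwartz K j) = lpKernel K j := rfl

lemma lpSchwartz_zero (K : 𝓢(Rn n, ℝ)) : lpSchwartz K 0 = K := by
  ext x
  simp [coe_lpSchwartz, lpKernel]

lemma eLpNorm_lpSchwartz (K : 𝓢(Rn n, ℝ)) (j : ℤ) :
    eLpNorm (lpSchwartz K j) 1 volume = eLpNorm K 1 volume := by
  simp only [eLpNorm_one_eq_lintegral_enorm,
    ← ofReal_integral_norm_eq_lintegral_enorm (SchwartzMap.integrable _)]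
  rw [← integral_zpow_smul_comp_zpow_smul j fun x ↦ ‖K x‖]
  simp [coe_lpSchwartz, lpKernel]

lemma ftC_lpSchwartz (K : 𝓢(Rn n, ℝ)) (j : ℤ) (ξ : Rn n) :
    ftC (lpSchwartz K j) ξ = ftC K ((2 : ℝ) ^ (-j) • ξ) := by
  have hpair (L : 𝓢(Rn n, ℝ)) (η : Rn n) : ftC L η = ∫ x, L x • (𝐞 (-inner ℝ x η) : ℂ) := by
    simp only [ftC, Real.fourier_eq, Circle.smul_def, Complex.real_smul, smul_eq_mul, mul_comm]
  rw [hpair, hpair, coe_lpSchwartz, integral_lpKernel_smul]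
  simp only [inner_smul_left, inner_smul_right, conj_trivial]

end Dilation

section BoundedConvolution

variable {V : Type*} [NormedAddCommGroup V] [InnerProductSpace ℝ V] [FiniteDimensional ℝ V]
  [MeasurableSpace V] [BorelSpace V]

lemma integrable_schwartz_mul_sub (K : 𝓢(V, ℝ)) (f : V →ᵇ ℝ) (x : V) :
    Integrable fun t ↦ K t * f (x - t) :=
  K.integrable.mul_bdd (c := ‖f‖) (by fun_prop) (Eventually.of_forall fun _ ↦ f.norm_coe_le_norm _)

lemma norm_convolution_le_integral_norm_mul_norm (K : 𝓢(V, ℝ)) (f : V →ᵇ ℝ) (x : V) :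
    ‖(K ⋆[ContinuousLinearMap.mul ℝ ℝ, volume] f) x‖ ≤ (∫ t, ‖K t‖) * ‖f‖ := by
  rw [← integral_mul_const]
  refine norm_integral_le_of_norm_le (K.integrable.norm.mul_const _)
    (Eventually.of_forall fun t ↦ ?_)
  rw [ContinuousLinearMap.mul_apply', norm_mul]
  gcongr
  exact f.norm_coe_le_norm _

/-- Convolution with a Schwartz kernel, as an operator on bounded continuous functions that is
also linear in the kernel. -/
def convBdd : 𝓢(V, ℝ) →ₗ[ℝ] (V →ᵇ ℝ) →ₗ[ℝ] (V →ᵇ ℝ) :=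
  LinearMap.mk₂ ℝ
    (fun K f ↦ .ofNormedAddCommGroup (K ⋆[ContinuousLinearMap.mul ℝ ℝ, volume] f)
      (BddAbove.continuous_convolution_right_of_integrable _
        ⟨‖f‖, Set.forall_mem_range.2 f.norm_coe_le_norm⟩ K.integrable f.continuous)
      _ (norm_convolution_le_integral_norm_mul_norm K f))
    (fun K L f ↦ by
      ext x
      simp [convolution_def,
        integral_add (integrable_schwartz_mul_sub K f x) (integrable_schwartz_mul_sub L f x)])
    (fun a K f ↦ by ext x; simp [convolution_def, mul_assoc, integral_const_mul])
    (fun K f g ↦ by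
      ext x
      simp [convolution_def, mul_add,
        integral_add (integrable_schwartz_mul_sub K f x) (integrable_schwartz_mul_sub K g x)])
    (fun a K f ↦ by ext x; simp [convolution_def, mul_left_comm, integral_const_mul])

lemma coe_convBdd (K : 𝓢(V, ℝ)) (f : V →ᵇ ℝ) :
    ⇑(convBdd K f) = K ⋆[ContinuousLinearMap.mul ℝ ℝ, volume] f := rfl

lemma convBdd_apply (K : 𝓢(V, ℝ)) (f : V →ᵇ ℝ) (x : V) :
    convBdd K f x = ∫ t, K t * f (x - t) := rfl

lemma norm_convBdd_le (K : 𝓢(V, ℝ)) (f : V →ᵇ ℝ) : ‖convBdd K f‖ ≤ (∫ t, ‖K t‖) * ‖f‖ :=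
  BoundedContinuousFunction.norm_ofNormedAddCommGroup_le _ (by positivity)
    (norm_convolution_le_integral_norm_mul_norm K f)

lemma eLpNorm_convBdd_le {p : ℝ≥0∞} (hp : 1 ≤ p) (K : 𝓢(V, ℝ)) (f : V →ᵇ ℝ) :
    eLpNorm (convBdd K f) p volume ≤ eLpNorm K 1 volume * eLpNorm f p volume := by
  have young := eLpNorm_convolution_le (μ := volume) (ContinuousLinearMap.mul ℝ ℝ) hp
    K.continuous.stronglyMeasurable f.continuous.aestronglyMeasurable
  rwa [enorm_eq_nnnorm, ContinuousLinearMap.opNNNorm_mul, ENNReal.coe_one, one_mul] at young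

lemma tendsto_convBdd_apply (K : 𝓢(V, ℝ)) {F : ℕ → V →ᵇ ℝ} {f : V →ᵇ ℝ} {M : ℝ}
    (hM : ∀ j, ‖F j‖ ≤ M) (hF : ∀ x, Tendsto (fun j ↦ F j x) atTop (𝓝 (f x))) (x : V) :
    Tendsto (fun j ↦ convBdd K (F j) x) atTop (𝓝 (convBdd K f x)) := by
  refine tendsto_integral_of_dominated_convergence (fun t ↦ ‖K t‖ * M) (fun j ↦ ?_)
    (K.integrable.norm.mul_const M) (fun j ↦ Eventually.of_forall fun t ↦ ?_)
    (Eventually.of_forall fun t ↦ ?_)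
  · exact (integrable_schwartz_mul_sub K (F j) x).aestronglyMeasurable
  · rw [ContinuousLinearMap.mul_apply', norm_mul]
    gcongr
    exact ((F j).norm_coe_le_norm _).trans (hM j)
  · exact (hF (x - t)).const_mul (K t)

end BoundedConvolution

section SpectralSupport

variable {V : Type*} [NormedAddCommGroup V]

section NormedSpace

variable [NormedSpace ℝ V]

/-- The complexification of a real Schwartz function; for `V = Rn n` its Fourier transform is
`ftC`. -/
def schwartzOfReal (K : 𝓢(V, ℝ)) : 𝓢(V, ℂ) := K.postcompCLM Complex.ofRealCLM

lemma schwartzOfReal_apply (K : 𝓢(V, ℝ)) (x : V) : schwartzOfReal K x = K x := rfl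

/-- The Schwartz function `x ↦ A (a - x)`. -/
def schwartzSubLeft (a : V) (A : 𝓢(V, ℂ)) : 𝓢(V, ℂ) :=
  (SchwartzMap.compCLMOfContinuousLinearEquiv ℂ (.neg ℝ) A).compSubConstCLM ℂ a

lemma schwartzSubLeft_apply (a : V) (A : 𝓢(V, ℂ)) (x : V) :
    schwartzSubLeft a A x = A (a - x) := by
  simp [schwartzSubLeft]

end NormedSpace

variable [InnerProductSpace ℝ V] [FiniteDimensional ℝ V] [MeasurableSpace V] [BorelSpace V]

lemma fourierInv_schwartzSubLeft (a : V) (A : 𝓢(V, ℂ)) (ξ : V) :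
    𝓕⁻ (schwartzSubLeft a A) ξ = 𝐞 (inner ℝ a ξ) • 𝓕 A ξ := by
  rw [SchwartzMap.fourierInv_coe, SchwartzMap.fourier_coe, Real.fourierInv_eq, Real.fourier_eq,
    Circle.smul_def, ← integral_smul, ← integral_sub_left_eq_self _ volume a]
  congr with x
  rw [schwartzSubLeft_apply, sub_sub_cancel, ← Circle.smul_def, smul_smul, ← AddChar.map_add_eq_mul,
    inner_sub_left, sub_eq_add_neg]

lemma fourierInv_pairing_eq_zero {U W : 𝓢(V, ℂ)} {b c : ℝ} (hU : ∀ ξ, b ≤ ‖ξ‖ → 𝓕⁻ U ξ = 0)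
    (hW : ∀ ξ, c ≤ ‖ξ‖ → 𝓕⁻ W ξ = 0) {ξ : V} (hξ : b + c ≤ ‖ξ‖) :
    𝓕⁻ (SchwartzMap.pairing (ContinuousLinearMap.mul ℂ ℂ) U W) ξ = 0 := by
  have hconv : 𝓕⁻ (SchwartzMap.pairing (ContinuousLinearMap.mul ℂ ℂ) U W) =
      SchwartzMap.convolution (ContinuousLinearMap.mul ℂ ℂ) (𝓕⁻ U) (𝓕⁻ W) := by
    simp [SchwartzMap.convolution]
  rw [hconv, SchwartzMap.convolution_apply, convolution_def]
  refine integral_eq_zero_of_ae (Eventually.of_forall fun t ↦ ?_)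
  rcases le_or_gt b ‖t‖ with ht | ht
  · simp [hU t ht]
  · have hsub : c ≤ ‖ξ - t‖ := by linarith [norm_sub_norm_le ξ t]
    simp [hW _ hsub]

lemma integral_mul_mul_eq_zero {K U W : 𝓢(V, ℂ)} {b c : ℝ} (hK : ∀ ξ, ‖ξ‖ < b + c → 𝓕 K ξ = 0)
    (hU : ∀ ξ, b ≤ ‖ξ‖ → 𝓕⁻ U ξ = 0) (hW : ∀ ξ, c ≤ ‖ξ‖ → 𝓕⁻ W ξ = 0) :
    ∫ x, K x * (U x * W x) = 0 := by
  set P := SchwartzMap.pairing (ContinuousLinearMap.mul ℂ ℂ) U W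
  have hparseval : ∫ x, K x * P x = ∫ ξ, 𝓕 K ξ * 𝓕⁻ P ξ := by
    simp [SchwartzMap.integral_fourier_mul_eq K (𝓕⁻ P)]
  refine hparseval.trans (integral_eq_zero_of_ae (Eventually.of_forall fun ξ ↦ ?_))
  rcases lt_or_ge ‖ξ‖ (b + c) with hξ | hξ
  · simp [hK ξ hξ]
  · simp [P, fourierInv_pairing_eq_zero hU hW hξ]

lemma integral_mul_sub_mul_sub_eq_zero {K A B : 𝓢(V, ℝ)} {b c : ℝ}
    (hK : ∀ ξ, ‖ξ‖ < b + c → 𝓕 (schwartzOfReal K) ξ = 0)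
    (hA : ∀ ξ, b ≤ ‖ξ‖ → 𝓕 (schwartzOfReal A) ξ = 0)
    (hB : ∀ ξ, c ≤ ‖ξ‖ → 𝓕 (schwartzOfReal B) ξ = 0) (x y : V) :
    ∫ t, K t * (A (x - t) * B (y - t)) = 0 := by
  have key := integral_mul_mul_eq_zero (U := schwartzSubLeft x (schwartzOfReal A))
    (W := schwartzSubLeft y (schwartzOfReal B)) hK
    (fun ξ hξ ↦ by rw [fourierInv_schwartzSubLeft, hA ξ hξ, smul_zero])
    (fun ξ hξ ↦ by rw [fourierInv_schwartzSubLeft, hB ξ hξ, smul_zero])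
  simp only [schwartzSubLeft_apply, schwartzOfReal_apply] at key
  exact_mod_cast key

lemma integral_mul_convBdd_eq_zero {F : V → ℝ} (hF : Integrable F) {A : 𝓢(V, ℝ)}
    (h : ∀ y, ∫ t, F t * A (y - t) = 0) (f : V →ᵇ ℝ) (x : V) :
    ∫ t, F t * convBdd A f (x - t) = 0 := by
  have hint : Integrable (fun z : V × V ↦ F z.2 * A (z.1 - z.2) * f (x - z.1))
      (volume.prod volume) :=
    (hF.convolution_integrand (ContinuousLinearMap.mul ℝ ℝ) A.integrable).mul_bdd (c := ‖f‖)
      (by fun_prop) (Eventually.of_forall fun _ ↦ f.norm_coe_le_norm _)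
  calc ∫ t, F t * convBdd A f (x - t) = ∫ t, ∫ y, F t * A (y - t) * f (x - y) := by
        congr with t
        rw [convBdd_apply, ← integral_const_mul, ← integral_sub_right_eq_self _ t]
        simp only [sub_sub_sub_cancel_right, mul_assoc]
    _ = ∫ y, (∫ t, F t * A (y - t)) * f (x - y) := by
        rw [← integral_integral_swap hint]
        simp only [integral_mul_const]
    _ = 0 := by simp [h]

/-- As `f` and `g` need not have a Fourier transform as functions, the spectral supports are
compared at the level of the kernels. -/
lemma convBdd_mul_eq_zero {K A B : 𝓢(V, ℝ)} {b c : ℝ}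
    (hK : ∀ ξ, ‖ξ‖ < b + c → 𝓕 (schwartzOfReal K) ξ = 0)
    (hA : ∀ ξ, b ≤ ‖ξ‖ → 𝓕 (schwartzOfReal A) ξ = 0)
    (hB : ∀ ξ, c ≤ ‖ξ‖ → 𝓕 (schwartzOfReal B) ξ = 0) (f g : V →ᵇ ℝ) :
    convBdd K (convBdd A f * convBdd B g) = 0 := by
  ext x
  have hmulB (y : V) : ∫ t, K t * B (y - t) * convBdd A f (x - t) = 0 := by
    refine integral_mul_convBdd_eq_zero
      (integrable_schwartz_mul_sub K B.toBoundedContinuousFunction y) (fun z ↦ ?_) f x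
    simpa only [mul_assoc, mul_comm (B _), SchwartzMap.toBoundedContinuousFunction_apply] using
      integral_mul_sub_mul_sub_eq_zero hK hA hB z y
  have hmul := integral_mul_convBdd_eq_zero (integrable_schwartz_mul_sub K (convBdd A f) x)
    (fun y ↦ by simpa only [mul_right_comm] using hmulB y) g x
  simpa only [convBdd_apply K, BoundedContinuousFunction.mul_apply, mul_assoc,
    BoundedContinuousFunction.coe_zero, Pi.zero_apply] using hmul

lemma schwartz_ext_of_fourier {K L : 𝓢(V, ℝ)}
    (h : ∀ ξ, 𝓕 (schwartzOfReal K) ξ = 𝓕 (schwartzOfReal L) ξ) : K = L := by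
  have hc : schwartzOfReal K = schwartzOfReal L :=
    (FourierTransform.fourierCLE ℂ 𝓢(V, ℂ)).injective (SchwartzMap.ext h)
  ext x
  simpa [schwartzOfReal_apply] using DFunLike.congr_fun hc x

end SpectralSupport

section LittlewoodPaley

/-- `lpProj K j` as a linear operator on bounded continuous functions. -/
def lpBdd (K : 𝓢(Rn n, ℝ)) (j : ℤ) : (Rn n →ᵇ ℝ) →ₗ[ℝ] (Rn n →ᵇ ℝ) := convBdd (lpSchwartz K j)

lemma coe_lpBdd (K : 𝓢(Rn n, ℝ)) (j : ℤ) (f : Rn n →ᵇ ℝ) : ⇑(lpBdd K j f) = lpProj K j f := rfl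

lemma norm_lpBdd_le (K : 𝓢(Rn n, ℝ)) (j : ℤ) (f : Rn n →ᵇ ℝ) :
    ‖lpBdd K j f‖ ≤ (∫ x, ‖K x‖) * ‖f‖ := by
  have hK := eLpNorm_lpSchwartz K j
  simp only [eLpNorm_one_eq_lintegral_enorm] at hK
  rw [integral_norm_eq_lintegral_enorm K.continuous.aestronglyMeasurable, ← hK,
    ← integral_norm_eq_lintegral_enorm (lpSchwartz K j).continuous.aestronglyMeasurable]
  exact norm_convBdd_le _ f

lemma eLpNorm_lpBdd_le {p : ℝ≥0∞} (hp : 1 ≤ p) (K : 𝓢(Rn n, ℝ)) (j : ℤ) (f : Rn n →ᵇ ℝ) :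
    eLpNorm (lpBdd K j f) p volume ≤ eLpNorm K 1 volume * eLpNorm f p volume := by
  rw [← eLpNorm_lpSchwartz K j]
  exact eLpNorm_convBdd_le hp _ f

lemma lpBdd_index_zero (K : 𝓢(Rn n, ℝ)) (f : Rn n →ᵇ ℝ) : lpBdd K 0 f = convBdd K f := by
  rw [lpBdd, lpSchwartz_zero]

lemma tendsto_lpBdd_apply {K : 𝓢(Rn n, ℝ)} (hK : ∫ x, K x = 1) (f : Rn n →ᵇ ℝ) (x : Rn n) :
    Tendsto (fun j : ℕ ↦ lpBdd K j f x) atTop (𝓝 (f x)) := by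
  have hdilate (j : ℕ) : lpBdd K j f x = ∫ t, K t • f (x - (2 : ℝ) ^ (-(j : ℤ)) • t) :=
    integral_lpKernel_smul K j fun t ↦ f (x - t)
  have hscale : Tendsto (fun j : ℕ ↦ (2 : ℝ) ^ (-(j : ℤ))) atTop (𝓝 0) := by
    simpa only [zpow_neg, zpow_natCast, ← inv_pow] using
      tendsto_pow_atTop_nhds_zero_of_lt_one (r := (2 : ℝ)⁻¹) (by norm_num) (by norm_num)
  have hpoint (t : Rn n) :
      Tendsto (fun j : ℕ ↦ f (x - (2 : ℝ) ^ (-(j : ℤ)) • t)) atTop (𝓝 (f x)) := by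
    refine (f.continuous.tendsto x).comp ?_
    simpa using (hscale.smul_const t).const_sub x
  simp_rw [hdilate]
  rw [show f x = ∫ t, K t • f x by rw [integral_smul_const, hK, one_smul]]
  refine tendsto_integral_of_dominated_convergence (fun t ↦ ‖K t‖ * ‖f‖)
    (fun j ↦ by fun_prop) (K.integrable.norm.mul_const _)
    (fun j ↦ Eventually.of_forall fun t ↦ ?_)
    (Eventually.of_forall fun t ↦ (hpoint t).const_smul (K t))
  rw [norm_smul]
  gcongr
  exact f.norm_coe_le_norm _

lemma ftC_lpSchwartz_eq_zero {A : 𝓢(Rn n, ℝ)} {b : ℝ} (hA : ∀ ξ, b ≤ ‖ξ‖ → ftC A ξ = 0) (j : ℤ)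
    {ξ : Rn n} (hξ : 2 ^ j * b ≤ ‖ξ‖) : ftC (lpSchwartz A j) ξ = 0 := by
  rw [ftC_lpSchwartz]
  apply hA
  rwa [norm_smul, norm_of_nonneg (by positivity), zpow_neg, le_inv_mul_iff₀ (by positivity)]

variable {ψ₀ Ψ : 𝓢(Rn n, ℝ)}

lemma IsLPF.ftC_eq_zero_of_norm_le (hψ : IsLPF n ψ₀) {ξ : Rn n} (hξ : ‖ξ‖ ≤ 1 / 2) :
    ftC ψ₀ ξ = 0 :=
  of_not_not fun h ↦ (hψ.ft_supp ξ h).1.not_ge hξ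

lemma IsLPF.ftC_eq_zero_of_le_norm (hψ : IsLPF n ψ₀) {ξ : Rn n} (hξ : 2 ≤ ‖ξ‖) :
    ftC ψ₀ ξ = 0 :=
  of_not_not fun h ↦ (hψ.ft_supp ξ h).2.not_ge hξ

lemma IsLPF.ftC_zero (hψ : IsLPF n ψ₀) : ftC ψ₀ 0 = 0 :=
  hψ.ftC_eq_zero_of_norm_le (by norm_num)

lemma IsLPF.lpBdd_mul_eq_zero (hψ : IsLPF n ψ₀) {A B : 𝓢(Rn n, ℝ)} {b c : ℝ}
    (hA : ∀ ξ, b ≤ ‖ξ‖ → ftC A ξ = 0) (hB : ∀ ξ, c ≤ ‖ξ‖ → ftC B ξ = 0) {i j k : ℤ}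
    (hk : 2 * (2 ^ i * b + 2 ^ j * c) ≤ 2 ^ k) (f g : Rn n →ᵇ ℝ) :
    lpBdd ψ₀ k (lpBdd A i f * lpBdd B j g) = 0 := by
  refine convBdd_mul_eq_zero (b := 2 ^ i * b) (c := 2 ^ j * c) (fun ξ hξ ↦ ?_)
    (fun ξ ↦ ftC_lpSchwartz_eq_zero hA i) (fun ξ ↦ ftC_lpSchwartz_eq_zero hB j) f g
  refine (ftC_lpSchwartz ψ₀ k ξ).trans (hψ.ftC_eq_zero_of_norm_le ?_)
  rw [norm_smul, norm_of_nonneg (by positivity), zpow_neg, inv_mul_le_iff₀ (by positivity)]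
  linarith

lemma IsLPF.summable_ftC (hψ : IsLPF n ψ₀) (ξ : Rn n) :
    Summable fun k : ℕ ↦ ftC ψ₀ ((2 : ℝ) ^ (-(k : ℤ)) • ξ) := by
  rcases eq_or_ne ξ 0 with rfl | hξ
  · simp [hψ.ftC_zero]
  · exact (hψ.ft_sum ξ hξ).summable.comp_injective Nat.cast_injective

lemma IsLPF.tsum_ftC_eq_one (hψ : IsLPF n ψ₀) {ξ : Rn n} (hξ : 1 ≤ ‖ξ‖) :
    ∑' k : ℕ, ftC ψ₀ ((2 : ℝ) ^ (-(k : ℤ)) • ξ) = 1 := by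
  have hne : ξ ≠ 0 := norm_pos_iff.1 (by linarith)
  refine ((Function.Injective.hasSum_iff Nat.cast_injective fun j hj ↦ ?_).2
    (hψ.ft_sum ξ hne)).tsum_eq
  have hneg : 1 ≤ -j := by
    by_contra! h
    exact hj ⟨j.toNat, by simp; omega⟩
  have htwo : (2 : ℝ) ≤ 2 ^ (-j) := by
    simpa using zpow_le_zpow_right₀ (one_le_two : (1 : ℝ) ≤ 2) hneg
  refine hψ.ftC_eq_zero_of_le_norm ?_
  rw [norm_smul, norm_of_nonneg (by positivity)]
  nlinarith

lemma IsLowPiece.ftC_eq_zero (hψ : IsLPF n ψ₀) (hΨ : IsLowPiece ψ₀ Ψ) {ξ : Rn n}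
    (hξ : 1 ≤ ‖ξ‖) : ftC Ψ ξ = 0 := by
  rw [hΨ ξ, hψ.tsum_ftC_eq_one hξ, sub_self]

lemma IsLowPiece.integral_eq_one (hψ : IsLPF n ψ₀) (hΨ : IsLowPiece ψ₀ Ψ) : ∫ x, Ψ x = 1 := by
  have h : ftC Ψ 0 = 1 := by simp [hΨ 0, hψ.ftC_zero]
  rw [ftC, Real.fourier_eq] at h
  simp only [inner_zero_right, neg_zero, AddChar.map_zero_eq_one, one_smul,
    integral_complex_ofReal] at h
  exact_mod_cast h

lemma IsLowPiece.ftC_half_smul (hψ : IsLPF n ψ₀) (hΨ : IsLowPiece ψ₀ Ψ) (ξ : Rn n) :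
    ftC Ψ ((2 : ℝ) ^ (-1 : ℤ) • ξ) = ftC Ψ ξ + ftC ψ₀ ξ := by
  have hshift (k : ℕ) :
      (2 : ℝ) ^ (-(k : ℤ)) • (2 : ℝ) ^ (-1 : ℤ) • ξ = (2 : ℝ) ^ (-((k + 1 : ℕ) : ℤ)) • ξ := by
    rw [smul_smul, ← zpow_add₀ two_ne_zero]
    congr 2
    push_cast
    ring
  rw [hΨ, hΨ, (hψ.summable_ftC ξ).tsum_eq_zero_add]
  simp only [hshift, Nat.cast_zero, neg_zero, zpow_zero, one_smul]
  ring

lemma IsLowPiece.lpSchwartz_add_one (hψ : IsLPF n ψ₀) (hΨ : IsLowPiece ψ₀ Ψ) (j : ℤ) :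
    lpSchwartz Ψ (j + 1) = lpSchwartz Ψ j + lpSchwartz ψ₀ j := by
  refine schwartz_ext_of_fourier fun ξ ↦ ?_
  have hadd : 𝓕 (schwartzOfReal (lpSchwartz Ψ j + lpSchwartz ψ₀ j)) ξ =
      ftC (lpSchwartz Ψ j) ξ + ftC (lpSchwartz ψ₀ j) ξ := by
    rw [schwartzOfReal, map_add, FourierTransform.fourier_add]
    rfl
  refine (ftC_lpSchwartz Ψ (j + 1) ξ).trans ?_
  rw [hadd, ftC_lpSchwartz, ftC_lpSchwartz, ← hΨ.ftC_half_smul hψ, smul_smul,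
    ← zpow_add₀ two_ne_zero, neg_add, add_comm (-j)]

lemma IsLowPiece.lpBdd_add_one (hψ : IsLPF n ψ₀) (hΨ : IsLowPiece ψ₀ Ψ) (j : ℤ) :
    lpBdd Ψ (j + 1) = lpBdd Ψ j + lpBdd ψ₀ j := by
  rw [lpBdd, hΨ.lpSchwartz_add_one hψ, map_add]
  rfl

end LittlewoodPaley

section Paraproducts

lemma eLpNorm_le_of_forall_tendsto {α E : Type*} [MeasurableSpace α] {μ : Measure α}
    [NormedAddCommGroup E] {p B : ℝ≥0∞} {F : ℕ → α → E} {f : α → E}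
    (hF : ∀ j, AEStronglyMeasurable (F j) μ) (hlim : ∀ x, Tendsto (fun j ↦ F j x) atTop (𝓝 (f x)))
    (hB : ∀ j, eLpNorm (F j) p μ ≤ B) : eLpNorm f p μ ≤ B :=
  (Lp.eLpNorm_lim_le_liminf_eLpNorm hF f (Eventually.of_forall hlim)).trans
    (liminf_le_of_frequently_le' (Frequently.of_forall hB))

variable {ψ₀ Ψ : 𝓢(Rn n, ℝ)} {p a b p₁ p₂ r₁ r₂ : ℝ≥0∞}

lemma eLpNorm_lpBdd_mul_le (hp : 1 ≤ p) [ENNReal.HolderTriple a b p] (K : 𝓢(Rn n, ℝ)) (k : ℤ)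
    (u v : Rn n →ᵇ ℝ) :
    eLpNorm (lpBdd K k (u * v)) p volume ≤
      eLpNorm K 1 volume * (eLpNorm u a volume * eLpNorm v b volume) := by
  refine (eLpNorm_lpBdd_le hp K k _).trans ?_
  gcongr
  rw [BoundedContinuousFunction.coe_mul, ← smul_eq_mul]
  exact eLpNorm_smul_le_mul_eLpNorm (by fun_prop) (by fun_prop)

lemma IsLPF.eLpNorm_lpBdd_mul_le_ite (hψ : IsLPF n ψ₀) (hp : 1 ≤ p) [ENNReal.HolderTriple a b p]
    {L M : 𝓢(Rn n, ℝ)} (hL : ∀ ξ, 1 ≤ ‖ξ‖ → ftC L ξ = 0) (hM : ∀ ξ, 2 ≤ ‖ξ‖ → ftC M ξ = 0)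
    {i j : ℕ} (hij : i ≤ j + 1) (k : ℕ) (u v : Rn n →ᵇ ℝ) :
    eLpNorm (lpBdd ψ₀ k (lpBdd L i u * lpBdd M j v)) p volume ≤
      eLpNorm ψ₀ 1 volume * eLpNorm L 1 volume *
        if k ≤ j + 2 then eLpNorm u a volume * eLpNorm (lpBdd M j v) b volume else 0 := by
  split_ifs with hk
  · refine (eLpNorm_lpBdd_mul_le (a := a) (b := b) hp ψ₀ k _ _).trans ?_
    rw [mul_assoc, ← mul_assoc (eLpNorm L 1 volume)]
    gcongr
    exact eLpNorm_lpBdd_le (hp.trans (ENNReal.HolderTriple.le a b p)) L i u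
  · have hi : (2 : ℝ) ^ i ≤ 2 ^ j * 2 := by
      simpa [pow_succ] using pow_le_pow_right₀ (one_le_two : (1 : ℝ) ≤ 2) hij
    have hjk : (2 : ℝ) ^ j * 2 ^ 3 ≤ 2 ^ k := by
      rw [← pow_add]
      exact pow_le_pow_right₀ one_le_two (by omega)
    rw [hψ.lpBdd_mul_eq_zero hL hM (by simp only [zpow_natCast]; linarith)]
    simp

lemma IsLowPiece.lpBdd_eq_add_sum (hψ : IsLPF n ψ₀) (hΨ : IsLowPiece ψ₀ Ψ) (J : ℕ)
    (f : Rn n →ᵇ ℝ) :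
    lpBdd Ψ J f = lpBdd Ψ 0 f + ∑ j ∈ Finset.range J, lpBdd ψ₀ j f := by
  induction J with
  | zero => simp
  | succ J ih =>
    rw [Finset.sum_range_succ, ← add_assoc, ← ih, Nat.cast_succ, hΨ.lpBdd_add_one hψ,
      LinearMap.add_apply]

lemma IsLowPiece.lpBdd_mul_lpBdd_eq_add_sum (hψ : IsLPF n ψ₀) (hΨ : IsLowPiece ψ₀ Ψ) (J : ℕ)
    (f g : Rn n →ᵇ ℝ) :
    lpBdd Ψ J f * lpBdd Ψ J g = lpBdd Ψ 0 f * lpBdd Ψ 0 g + ∑ j ∈ Finset.range J,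
      (lpBdd Ψ j f * lpBdd ψ₀ j g + lpBdd Ψ (j + 1 : ℕ) g * lpBdd ψ₀ j f) := by
  induction J with
  | zero => simp
  | succ J ih =>
    rw [Finset.sum_range_succ, ← add_assoc, ← ih, Nat.cast_succ, hΨ.lpBdd_add_one hψ,
      LinearMap.add_apply, LinearMap.add_apply]
    ring

/-- The `L^p` norms of the Littlewood–Paley blocks `Δ_j f`, with the norm of the low-frequency
part `Ψ ∗ f` added to that of the block `j = 0`. -/
def blockNorm (ψ₀ Ψ : 𝓢(Rn n, ℝ)) (p : ℝ≥0∞) (f : Rn n →ᵇ ℝ) (j : ℕ) : ℝ≥0∞ :=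
  eLpNorm (lpBdd ψ₀ j f) p volume + if j = 0 then eLpNorm (lpBdd Ψ 0 f) p volume else 0

lemma IsLowPiece.eLpNorm_le_tsum_blockNorm (hψ : IsLPF n ψ₀) (hΨ : IsLowPiece ψ₀ Ψ) (hp : 1 ≤ p)
    (f : Rn n →ᵇ ℝ) : eLpNorm f p volume ≤ ∑' j, blockNorm ψ₀ Ψ p f j := by
  refine eLpNorm_le_of_forall_tendsto (fun J ↦ (lpBdd Ψ J f).continuous.aestronglyMeasurable)
    (tendsto_lpBdd_apply (hΨ.integral_eq_one hψ) f) fun J ↦ ?_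
  rw [hΨ.lpBdd_eq_add_sum hψ, BoundedContinuousFunction.coe_add, BoundedContinuousFunction.coe_sum]
  calc _ ≤ eLpNorm (lpBdd Ψ 0 f) p volume +
        ∑ j ∈ Finset.range J, eLpNorm (lpBdd ψ₀ j f) p volume := by
        refine (eLpNorm_add_le (by fun_prop) (by fun_prop) hp).trans ?_
        gcongr
        exact eLpNorm_sum_le (fun j _ ↦ by fun_prop) hp
    _ ≤ _ := add_sum_range_le_tsum _ _ J

lemma IsLowPiece.eLpNorm_lpBdd_increment_le (hψ : IsLPF n ψ₀) (hΨ : IsLowPiece ψ₀ Ψ) (hp : 1 ≤ p)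
    [ENNReal.HolderTriple p₁ p₂ p] [ENNReal.HolderTriple r₁ r₂ p] (k j : ℕ) (f g : Rn n →ᵇ ℝ) :
    eLpNorm (lpBdd ψ₀ k (lpBdd Ψ j f * lpBdd ψ₀ j g + lpBdd Ψ (j + 1 : ℕ) g * lpBdd ψ₀ j f))
        p volume ≤
      eLpNorm ψ₀ 1 volume * eLpNorm Ψ 1 volume * if k ≤ j + 2 then
        eLpNorm f p₁ volume * eLpNorm (lpBdd ψ₀ j g) p₂ volume +
          eLpNorm g r₁ volume * eLpNorm (lpBdd ψ₀ j f) r₂ volume else 0 := by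
  have hΨ_supp (ξ : Rn n) : 1 ≤ ‖ξ‖ → ftC Ψ ξ = 0 := hΨ.ftC_eq_zero hψ
  have hψ_supp (ξ : Rn n) : 2 ≤ ‖ξ‖ → ftC ψ₀ ξ = 0 := hψ.ftC_eq_zero_of_le_norm
  have hfg := hψ.eLpNorm_lpBdd_mul_le_ite (a := p₁) (b := p₂) hp hΨ_supp hψ_supp j.le_succ k f g
  have hgf := hψ.eLpNorm_lpBdd_mul_le_ite (a := r₁) (b := r₂) hp hΨ_supp hψ_supp
    (le_refl (j + 1)) k g f
  rw [map_add, BoundedContinuousFunction.coe_add]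
  refine (eLpNorm_add_le (by fun_prop) (by fun_prop) hp).trans ((add_le_add hfg hgf).trans_eq ?_)
  split_ifs <;> simp [mul_add]

lemma IsLowPiece.eLpNorm_lpBdd_lpBdd_mul_lpBdd_le (hψ : IsLPF n ψ₀) (hΨ : IsLowPiece ψ₀ Ψ)
    (hp : 1 ≤ p) [ENNReal.HolderTriple p₁ p₂ p] [ENNReal.HolderTriple r₁ r₂ p] (k J : ℕ)
    (f g : Rn n →ᵇ ℝ) :
    eLpNorm (lpBdd ψ₀ k (lpBdd Ψ J f * lpBdd Ψ J g)) p volume ≤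
      eLpNorm ψ₀ 1 volume * eLpNorm Ψ 1 volume * ∑' j, if k ≤ j + 2 then
        eLpNorm f p₁ volume * blockNorm ψ₀ Ψ p₂ g j +
          eLpNorm g r₁ volume * blockNorm ψ₀ Ψ r₂ f j else 0 := by
  set A := eLpNorm ψ₀ 1 volume * eLpNorm Ψ 1 volume
  let low := eLpNorm f p₁ volume * eLpNorm (lpBdd Ψ 0 g) p₂ volume
  let high (j : ℕ) := eLpNorm f p₁ volume * eLpNorm (lpBdd ψ₀ j g) p₂ volume +
    eLpNorm g r₁ volume * eLpNorm (lpBdd ψ₀ j f) r₂ volume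
  have hlow : eLpNorm (lpBdd ψ₀ k (lpBdd Ψ 0 f * lpBdd Ψ 0 g)) p volume ≤
      A * if k ≤ 2 then low else 0 := by
    have hΨ_supp (ξ : Rn n) : 1 ≤ ‖ξ‖ → ftC Ψ ξ = 0 := hΨ.ftC_eq_zero hψ
    simpa using hψ.eLpNorm_lpBdd_mul_le_ite hp hΨ_supp (fun ξ hξ ↦ hΨ_supp ξ (by linarith))
      zero_le_one k f g
  calc eLpNorm (lpBdd ψ₀ k (lpBdd Ψ J f * lpBdd Ψ J g)) p volume
      ≤ A * ((if k ≤ 2 then low else 0) +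
        ∑ j ∈ Finset.range J, if k ≤ j + 2 then high j else 0) := by
        rw [hΨ.lpBdd_mul_lpBdd_eq_add_sum hψ, map_add, map_sum, mul_add, Finset.mul_sum,
          BoundedContinuousFunction.coe_add, BoundedContinuousFunction.coe_sum]
        refine (eLpNorm_add_le (by fun_prop) (by fun_prop) hp).trans (add_le_add hlow ?_)
        exact (eLpNorm_sum_le (fun j _ ↦ by fun_prop) hp).trans
          (Finset.sum_le_sum fun j _ ↦ hΨ.eLpNorm_lpBdd_increment_le hψ hp k j f g)
    _ ≤ A * ∑' j, ((if k ≤ j + 2 then high j else 0) +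
          if j = 0 then (if k ≤ 2 then low else 0) else 0) := by
        gcongr
        exact add_sum_range_le_tsum _ _ J
    _ ≤ _ := by
        gcongr with j
        simp only [low, high, blockNorm, mul_add]
        rcases eq_or_ne j 0 with rfl | hj
        · by_cases hk : k ≤ 2
          · simp [hk, add_right_comm _ _ (_ * eLpNorm (lpBdd Ψ 0 g) p₂ volume), ← add_assoc]
          · simp [hk]
        · simp [hj]

lemma IsLowPiece.eLpNorm_lpBdd_mul_le_tsum (hψ : IsLPF n ψ₀) (hΨ : IsLowPiece ψ₀ Ψ) (hp : 1 ≤ p)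
    [ENNReal.HolderTriple p₁ p₂ p] [ENNReal.HolderTriple r₁ r₂ p] (k : ℕ) (f g : Rn n →ᵇ ℝ) :
    eLpNorm (lpBdd ψ₀ k (f * g)) p volume ≤
      eLpNorm ψ₀ 1 volume * eLpNorm Ψ 1 volume * ∑' j, if k ≤ j + 2 then
        eLpNorm f p₁ volume * blockNorm ψ₀ Ψ p₂ g j +
          eLpNorm g r₁ volume * blockNorm ψ₀ Ψ r₂ f j else 0 := by
  have hΨ_int := hΨ.integral_eq_one hψ
  refine eLpNorm_le_of_forall_tendsto (F := fun J : ℕ ↦ lpBdd ψ₀ k (lpBdd Ψ J f * lpBdd Ψ J g))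
    (fun J ↦ by fun_prop) (tendsto_convBdd_apply _ (M := (∫ x, ‖Ψ x‖) * ‖f‖ * ((∫ x, ‖Ψ x‖) * ‖g‖))
      (fun J ↦ ?_) fun x ↦ ?_) fun J ↦ hΨ.eLpNorm_lpBdd_lpBdd_mul_lpBdd_le hψ hp k J f g
  · exact (norm_mul_le _ _).trans (by gcongr <;> exact norm_lpBdd_le Ψ J _)
  · exact (tendsto_lpBdd_apply hΨ_int f x).mul (tendsto_lpBdd_apply hΨ_int g x)

end Paraproducts

section Leibniz

variable {ψ₀ Ψ : 𝓢(Rn n, ℝ)} {s : ℝ} {p q p₁ p₂ r₁ r₂ : ℝ≥0∞}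

lemma besovNorm_eq_add_dyadicNorm (hq : q ≠ 0) (f : Rn n →ᵇ ℝ) :
    besovNorm ψ₀ Ψ s p q f = eLpNorm (lpBdd Ψ 0 f) p volume +
      dyadicNorm s q fun j ↦ eLpNorm (lpBdd ψ₀ j f) p volume := by
  have hweight (j : ℕ) : ENNReal.ofReal ((2 : ℝ) ^ (j * s)) = 2 ^ (j * s) := by
    rw [← ENNReal.ofReal_rpow_of_pos two_pos, ENNReal.ofReal_ofNat]
  rw [dyadicNorm_eq_ite s hq, lpBdd_index_zero]
  simp only [besovNorm, hweight, coe_lpBdd, coe_convBdd]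

lemma dyadicNorm_blockNorm_le (hq : 1 ≤ q) (f : Rn n →ᵇ ℝ) :
    dyadicNorm s q (blockNorm ψ₀ Ψ p f) ≤ besovNorm ψ₀ Ψ s p q f := by
  have hq₀ : q ≠ 0 := (one_pos.trans_le hq).ne'
  rw [besovNorm_eq_add_dyadicNorm hq₀, add_comm]
  exact (dyadicNorm_add_le hq _ _).trans (by gcongr; exact dyadicNorm_ite_eq_zero_le hq₀ _)

lemma IsLowPiece.eLpNorm_le_mul_besovNorm (hψ : IsLPF n ψ₀) (hΨ : IsLowPiece ψ₀ Ψ) (hp : 1 ≤ p)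
    (hq : 1 ≤ q) (f : Rn n →ᵇ ℝ) :
    eLpNorm f p volume ≤
      (∑' j : ℕ, (2 : ℝ≥0∞) ^ (-(j * s))) * besovNorm ψ₀ Ψ s p q f := by
  refine (hΨ.eLpNorm_le_tsum_blockNorm hψ hp f).trans
    ((tsum_le_mul_dyadicNorm (s := s) (one_pos.trans_le hq).ne' _).trans ?_)
  gcongr
  exact dyadicNorm_blockNorm_le hq f

lemma IsLowPiece.dyadicNorm_mul_le (hψ : IsLPF n ψ₀) (hΨ : IsLowPiece ψ₀ Ψ) (hp : 1 ≤ p)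
    (hq : 1 ≤ q) [ENNReal.HolderTriple p₁ p₂ p] [ENNReal.HolderTriple r₁ r₂ p]
    (f g : Rn n →ᵇ ℝ) :
    dyadicNorm s q (fun k ↦ eLpNorm (lpBdd ψ₀ k (f * g)) p volume) ≤
      eLpNorm ψ₀ 1 volume * eLpNorm Ψ 1 volume *
        (2 ^ (2 * s) * ∑' j : ℕ, (2 : ℝ≥0∞) ^ (-(j * s))) *
        (eLpNorm f p₁ volume * besovNorm ψ₀ Ψ s p₂ q g +
          eLpNorm g r₁ volume * besovNorm ψ₀ Ψ s r₂ q f) := by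
  refine (dyadicNorm_mono fun k ↦ hΨ.eLpNorm_lpBdd_mul_le_tsum (p₁ := p₁) (p₂ := p₂) (r₁ := r₁)
    (r₂ := r₂) hψ hp k f g).trans ((dyadicNorm_const_mul_le _ _).trans ?_)
  rw [mul_assoc (eLpNorm ψ₀ 1 volume * eLpNorm Ψ 1 volume)]
  gcongr
  refine (dyadicNorm_tsum_le hq 2 _).trans ?_
  push_cast
  gcongr
  refine (dyadicNorm_add_le hq _ _).trans (add_le_add ?_ ?_) <;>
  · refine (dyadicNorm_const_mul_le _ _).trans ?_
    gcongr
    exact dyadicNorm_blockNorm_le hq _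

lemma IsLowPiece.besovNorm_mul_le (hψ : IsLPF n ψ₀) (hΨ : IsLowPiece ψ₀ Ψ) (hp : 1 ≤ p)
    (hq : 1 ≤ q) [ENNReal.HolderTriple p₁ p₂ p] [ENNReal.HolderTriple r₁ r₂ p]
    (f g : Rn n →ᵇ ℝ) :
    besovNorm ψ₀ Ψ s p q (f * g : Rn n →ᵇ ℝ) ≤
      (eLpNorm Ψ 1 volume * (∑' j : ℕ, (2 : ℝ≥0∞) ^ (-(j * s))) +
        eLpNorm ψ₀ 1 volume * eLpNorm Ψ 1 volume *
          (2 ^ (2 * s) * ∑' j : ℕ, (2 : ℝ≥0∞) ^ (-(j * s)))) *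
        (eLpNorm f p₁ volume * besovNorm ψ₀ Ψ s p₂ q g +
          eLpNorm g r₁ volume * besovNorm ψ₀ Ψ s r₂ q f) := by
  rw [besovNorm_eq_add_dyadicNorm (one_pos.trans_le hq).ne', add_mul]
  refine add_le_add ?_ (hΨ.dyadicNorm_mul_le hψ hp hq f g)
  set W := ∑' j : ℕ, (2 : ℝ≥0∞) ^ (-(j * s))
  have hp₂ : 1 ≤ p₂ := hp.trans (ENNReal.HolderTriple.le p₂ p₁ p)
  calc eLpNorm (lpBdd Ψ 0 (f * g)) p volume
      ≤ eLpNorm Ψ 1 volume * (eLpNorm f p₁ volume * eLpNorm g p₂ volume) :=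
        eLpNorm_lpBdd_mul_le hp Ψ 0 f g
    _ ≤ eLpNorm Ψ 1 volume * (eLpNorm f p₁ volume * (W * besovNorm ψ₀ Ψ s p₂ q g)) := by
        gcongr
        exact hΨ.eLpNorm_le_mul_besovNorm hψ hp₂ hq g
    _ = eLpNorm Ψ 1 volume * W * (eLpNorm f p₁ volume * besovNorm ψ₀ Ψ s p₂ q g) := by ring
    _ ≤ _ := by
        gcongr
        exact le_self_add

end Leibniz

theorem besov_fractional_leibniz_general {ψ₀ Ψ : 𝓢(Rn n, ℝ)} (hψ : IsLPF n ψ₀)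
    (hΨ : IsLowPiece ψ₀ Ψ) {s : ℝ} (hs : 0 < s) :
    ∃ C : ℝ, 0 < C ∧ ∀ q p p₁ p₂ r₁ r₂ : ℝ≥0∞, 1 ≤ q → 1 ≤ p →
      1 / p = 1 / p₁ + 1 / p₂ → 1 / p = 1 / r₁ + 1 / r₂ → ∀ f g : Rn n →ᵇ ℝ,
        besovNorm ψ₀ Ψ s p q (fun x ↦ f x * g x) ≤ ENNReal.ofReal C *
          (eLpNorm f p₁ volume * besovNorm ψ₀ Ψ s p₂ q g +
            eLpNorm g r₁ volume * besovNorm ψ₀ Ψ s r₂ q f) := by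
  set W := ∑' j : ℕ, (2 : ℝ≥0∞) ^ (-(j * s))
  set A := eLpNorm Ψ 1 volume * W + eLpNorm ψ₀ 1 volume * eLpNorm Ψ 1 volume * (2 ^ (2 * s) * W)
  have hK (K : 𝓢(Rn n, ℝ)) : eLpNorm K 1 volume ≠ ∞ := (K.memLp 1 volume).eLpNorm_ne_top
  have hW : W ≠ ∞ := tsum_two_rpow_neg_ne_top hs
  have h2 : (2 : ℝ≥0∞) ^ (2 * s) ≠ ∞ := ENNReal.rpow_ne_top_of_nonneg (by positivity) (by simp)
  have hA : A ≠ ∞ := ENNReal.add_ne_top.2 ⟨ENNReal.mul_ne_top (hK Ψ) hW,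
    ENNReal.mul_ne_top (ENNReal.mul_ne_top (hK ψ₀) (hK Ψ)) (ENNReal.mul_ne_top h2 hW)⟩
  refine ⟨A.toReal + 1, by positivity, fun q p p₁ p₂ r₁ r₂ hq hp hpp hpr f g ↦ ?_⟩
  have : ENNReal.HolderTriple p₁ p₂ p := ⟨by simpa only [one_div] using hpp.symm⟩
  have : ENNReal.HolderTriple r₁ r₂ p := ⟨by simpa only [one_div] using hpr.symm⟩
  refine (hΨ.besovNorm_mul_le hψ hp hq (p₁ := p₁) (p₂ := p₂) (r₁ := r₁) (r₂ := r₂) f g).trans ?_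
  gcongr
  exact (ENNReal.le_ofReal_iff_toReal_le hA (by positivity)).2 (by linarith)

/-- Fractional Leibniz rule in Besov spaces: for `s > 0`, `q ∈ [1,∞]` and
`p, p₁, p₂, r₁, r₂ ∈ [1,∞]` with `1/p = 1/p₁ + 1/p₂ = 1/r₁ + 1/r₂` and `p < ∞`,
`‖fg‖_{B^s_{p,q}} ≤ C (‖f‖_{L^{p₁}} ‖g‖_{B^s_{p₂,q}} + ‖g‖_{L^{r₁}} ‖f‖_{B^s_{r₂,q}})`. -/
theorem besov_fractional_leibniz
    (n : ℕ) (hn : 1 ≤ n) (ψ₀ Ψ : SchwartzMap (Rn n) ℝ)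
    (hψ : IsLPF n ψ₀) (hΨ : IsLowPiece ψ₀ Ψ)
    (s : ℝ) (hs : 0 < s) (q : ℝ≥0∞) (hq : 1 ≤ q)
    (p p₁ p₂ r₁ r₂ : ℝ≥0∞) (hp : 1 ≤ p) (hpfin : p < ∞)
    (hp₁ : 1 ≤ p₁) (hp₂ : 1 ≤ p₂) (hr₁ : 1 ≤ r₁) (hr₂ : 1 ≤ r₂)
    (hpp : 1 / p = 1 / p₁ + 1 / p₂) (hpr : 1 / p = 1 / r₁ + 1 / r₂) :
    ∃ C : ℝ, 0 < C ∧ ∀ f g : SchwartzMap (Rn n) ℝ,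
      besovNorm ψ₀ Ψ s p q (fun x => f x * g x)
        ≤ ENNReal.ofReal C *
          (eLpNorm (fun x => f x) p₁ volume * besovNorm ψ₀ Ψ s p₂ q (fun x => g x) +
           eLpNorm (fun x => g x) r₁ volume * besovNorm ψ₀ Ψ s r₂ q (fun x => f x)) := by
  obtain ⟨C, hC, hbound⟩ := besov_fractional_leibniz_general hψ hΨ hs
  exact ⟨C, hC, fun f g ↦ hbound q p p₁ p₂ r₁ r₂ hq hp hpp hpr
    f.toBoundedContinuousFunction g.toBoundedContinuousFunction⟩
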